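/- Let t₁ and t₂ be two distinct reflections of G4 lying in the same conjugacy class R_j (j ∈ {1,2}). Then the Hurwitz orbit of the pair (t₁, t₂) has exactly three elements, and exactly three of the four reflections of R_j appear as entries of pairs in this orbit. -/

import Mathlib

noncomputable section

open Matrix Complex

/-- The `i`-th Hurwitz move on length-`k` tuples of group elements. -/
def IsHurwitzMove {G : Type*} [Group G] {k : ℕ} (t t' : Fin k → G) : Prop :=
  ∃ i : ℕ, ∃ h : i + 1 < k,
    t' ⟨i, Nat.lt_of_succ_lt h⟩ = t ⟨i + 1, h⟩ ∧
    t' ⟨i + 1, h⟩ = (t ⟨i + 1, h⟩)⁻¹ * t ⟨i, Nat.lt_of_succ_lt h⟩ * t ⟨i + 1, h⟩ ∧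
    ∀ j : Fin k, (j : ℕ) ≠ i → (j : ℕ) ≠ i + 1 → t' j = t j

/-- Two tuples lie in the same Hurwitz orbit. -/
def SameHurwitzOrbit {G : Type*} [Group G] {k : ℕ} (t t' : Fin k → G) : Prop :=
  Relation.EqvGen IsHurwitzMove t t'

/-- A group element `r` appears (as an entry) in the Hurwitz orbit of the tuple `t`. -/
def Appears {G : Type*} [Group G] {k : ℕ} (r : G) (t : Fin k → G) : Prop :=
  ∃ s : Fin k → G, SameHurwitzOrbit t s ∧ ∃ j, s j = r

/-- A tuple has two consecutive equal entries. -/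
def HasConsecutiveEqualPair {G : Type*} [Group G] {k : ℕ} (t : Fin k → G) : Prop :=
  ∃ i : ℕ, ∃ h : i + 1 < k, t ⟨i, Nat.lt_of_succ_lt h⟩ = t ⟨i + 1, h⟩

/-- Replace the `p`-th entry of a tuple by two consecutive copies of its square. -/
def doubleAt {G : Type*} [Group G] {m : ℕ} (t : Fin m → G) (p : Fin m) : Fin (m + 1) → G :=
  fun j =>
    if h1 : (j : ℕ) < (p : ℕ) then t ⟨j, h1.trans p.isLt⟩
    else if h2 : (j : ℕ) ≤ (p : ℕ) + 1 then (t p) ^ 2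
    else t ⟨(j : ℕ) - 1, by have := j.isLt; omega⟩

/-- `ω = e^(2πi/3)`. -/
def ω : ℂ := Complex.exp (2 * Real.pi * Complex.I / 3)

def AMat : Matrix (Fin 2) (Fin 2) ℂ := !![1, 0; 0, ω]

def BMat : Matrix (Fin 2) (Fin 2) ℂ :=
  !![(ω - ω ^ 2) / 3, ω ^ 2; (-2 * ω ^ 2) / 3, (-ω - 2 * ω ^ 2) / 3]

/-- The complex reflection group G₄ as the subgroup of GL(2,ℂ) generated by `AMat`, `BMat`. -/
def G4 : Subgroup (GL (Fin 2) ℂ) :=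
  Subgroup.closure {g : GL (Fin 2) ℂ |
    (g : Matrix (Fin 2) (Fin 2) ℂ) = AMat ∨ (g : Matrix (Fin 2) (Fin 2) ℂ) = BMat}

/-- The matrix underlying an element of G₄. -/
def mat (t : G4) : Matrix (Fin 2) (Fin 2) ℂ := ((t : GL (Fin 2) ℂ) : Matrix (Fin 2) (Fin 2) ℂ)

/-- A reflection in G₄: a non-identity element with eigenvalue 1. -/
def IsReflection (t : G4) : Prop := t ≠ 1 ∧ (mat t - 1).det = 0

/-- The conjugacy class R₁ of reflections of determinant ω. -/
def R1 : Set G4 := {t | IsReflection t ∧ (mat t).det = ω}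

/-- The conjugacy class R₂ of reflections of determinant ω². -/
def R2 : Set G4 := {t | IsReflection t ∧ (mat t).det = ω ^ 2}

/-- A Coxeter element of G₄: an element with a primitive 6th root of unity as eigenvalue. -/
def IsCoxeter (c : G4) : Prop :=
  ∃ ζ : ℂ, IsPrimitiveRoot ζ 6 ∧ (mat c - ζ • (1 : Matrix (Fin 2) (Fin 2) ℂ)).det = 0

/-- The relators of G₅: a³, b³, abab(baba)⁻¹. -/
def g5Rels : Set (FreeGroup (Fin 2)) :=
  {FreeGroup.of 0 ^ 3, FreeGroup.of 1 ^ 3,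
    FreeGroup.of 0 * FreeGroup.of 1 * FreeGroup.of 0 * FreeGroup.of 1 *
      (FreeGroup.of 1 * FreeGroup.of 0 * FreeGroup.of 1 * FreeGroup.of 0)⁻¹}

/-- The complex reflection group G₅, by its presentation ⟨a,b | a³ = b³ = 1, abab = baba⟩. -/
abbrev G5 := PresentedGroup g5Rels

def ga : G5 := PresentedGroup.of 0
def gb : G5 := PresentedGroup.of 1

/-- The conjugacy class of `a` in G₅. -/
def S1 : Set G5 := {t | IsConj ga t}
/-- The conjugacy class of `b` in G₅. -/
def S2 : Set G5 := {t | IsConj gb t}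
/-- The conjugacy class of `a²` in G₅. -/
def S3 : Set G5 := {t | IsConj (ga ^ 2) t}
/-- The conjugacy class of `b²` in G₅. -/
def S4 : Set G5 := {t | IsConj (gb ^ 2) t}

/-- A reflection in G₅: a conjugate of a, b, a², or b². -/
def IsReflection5 (t : G5) : Prop := t ∈ S1 ∨ t ∈ S2 ∨ t ∈ S3 ∨ t ∈ S4

/-- A Coxeter element of G₅: an element of order 12. -/
def IsCoxeter5 (c : G5) : Prop := orderOf c = 12

/-!
On pairs, a Hurwitz move is a permutation fixing the product, so the first entry is injective on a
Hurwitz orbit, and every entry is the first entry of some pair in the orbit: the orbit has as many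
entries as elements. If `t₁ t₂ t₁ = t₂ t₁ t₂`, the third power of the move fixes `(t₁, t₂)`, so for
`t₁ ≠ t₂` the orbit has size `3` because `3` is prime.

For `2 × 2` matrices of equal trace `τ` and determinant `d`, the braid relation holds as soon as
`tr (t₁ t₂) = d`. For reflections of determinant `d` with `d² + d + 1 = 0` one has `τ = 1 + d`, so
`τ² = d`, and the identity `d tr (t₁ t₂⁻¹) = τ² - tr (t₁ t₂)` reduces this to
`tr (t₁ t₂⁻¹) = 0`. Finally `G₄` is the semidirect product of the quaternion group (the norm one
Lipschitz quaternions) by the cyclic group generated by `A`, so `t₁ t₂⁻¹`, having determinant `1`,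
is `1`, `-1` or has trace zero; the first two are excluded by `t₁ ≠ t₂` and by the traces.
-/

open Quaternion

section Hurwitz

variable {G : Type*} [Group G] {k : ℕ}

lemma SameHurwitzOrbit.map_eq {α : Type*} {f : (Fin k → G) → α}
    (hf : ∀ t s, IsHurwitzMove t s → f t = f s) {t s : Fin k → G} (h : SameHurwitzOrbit t s) :
    f t = f s :=
  congrArg (Quot.lift f hf) (Quot.eqvGen_sound h)

lemma IsHurwitzMove.forall_mem_iff {S : Set G} (hS : ∀ x ∈ S, ∀ g, g * x * g⁻¹ ∈ S)
    {t s : Fin k → G} (h : IsHurwitzMove t s) : (∀ j, t j ∈ S) ↔ ∀ j, s j ∈ S := by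
  obtain ⟨i, hi, hfst, hsnd, hrest⟩ := h
  have h_split (u : Fin k → G) : (∀ j, u j ∈ S) ↔ u ⟨i, Nat.lt_of_succ_lt hi⟩ ∈ S ∧
      u ⟨i + 1, hi⟩ ∈ S ∧ ∀ j : Fin k, (j : ℕ) ≠ i → (j : ℕ) ≠ i + 1 → u j ∈ S := by
    refine ⟨fun hu => ⟨hu _, hu _, fun j _ _ => hu j⟩, fun ⟨hu, hu', hu_rest⟩ j => ?_⟩
    by_cases hj : (j : ℕ) = i
    · exact (Fin.ext hj : j = ⟨i, Nat.lt_of_succ_lt hi⟩) ▸ hu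
    by_cases hj' : (j : ℕ) = i + 1
    · exact (Fin.ext hj' : j = ⟨i + 1, hi⟩) ▸ hu'
    exact hu_rest j hj hj'
  have h_conj (x g : G) : g⁻¹ * x * g ∈ S ↔ x ∈ S :=
    ⟨fun hx => by simpa [mul_assoc] using hS _ hx g, fun hx => by simpa using hS x hx g⁻¹⟩
  have h_rest : (∀ j : Fin k, (j : ℕ) ≠ i → (j : ℕ) ≠ i + 1 → s j ∈ S) ↔
      ∀ j : Fin k, (j : ℕ) ≠ i → (j : ℕ) ≠ i + 1 → t j ∈ S :=
    forall₃_congr fun j hj hj' => by rw [hrest j hj hj']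
  rw [h_split t, h_split s, hfst, hsnd, h_conj, h_rest, and_left_comm]

lemma Appears.mem {S : Set G} (hS : ∀ x ∈ S, ∀ g, g * x * g⁻¹ ∈ S) {t : Fin k → G}
    (ht : ∀ j, t j ∈ S) {r : G} (h : Appears r t) : r ∈ S := by
  obtain ⟨s, hts, j, rfl⟩ := h
  exact (hts.map_eq fun _ _ hmove => propext (hmove.forall_mem_iff hS)).mp ht j

/-- The Hurwitz move on pairs, as a permutation: `(a, b) ↦ (b, b⁻¹ a b)`. -/
def pairMove : Equiv.Perm (Fin 2 → G) where
  toFun t := ![t 1, (t 1)⁻¹ * t 0 * t 1]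
  invFun t := ![t 0 * t 1 * (t 0)⁻¹, t 0]
  left_inv t := by ext j; fin_cases j <;> simp [mul_assoc]
  right_inv t := by ext j; fin_cases j <;> simp [mul_assoc]

lemma pairMove_apply (t : Fin 2 → G) : pairMove t = ![t 1, (t 1)⁻¹ * t 0 * t 1] := rfl

lemma isHurwitzMove_iff_pairMove_eq {t s : Fin 2 → G} : IsHurwitzMove t s ↔ pairMove t = s := by
  constructor
  · rintro ⟨i, hi, hfst, hsnd, -⟩
    obtain rfl : i = 0 := by omega
    ext j
    fin_cases j
    · exact hfst.symm
    · exact hsnd.symm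
  · rintro rfl
    exact ⟨0, by omega, rfl, rfl, fun j _ _ => by omega⟩

lemma eqvGen_perm_apply_iff_sameCycle {α : Type*} (f : Equiv.Perm α) {x y : α} :
    Relation.EqvGen (fun a b => f a = b) x y ↔ f.SameCycle x y := by
  constructor
  · intro h
    induction h with
    | rel a b hab => exact ⟨1, hab⟩
    | refl a => exact .rfl
    | symm a b _ ih => exact ih.symm
    | trans a b c _ _ ihab ihbc => exact ihab.trans ihbc
  · rintro ⟨n, rfl⟩
    induction n with
    | zero => exact .refl _
    | succ n ih =>
      rw [add_comm, _root_.zpow_one_add]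
      exact .trans _ _ _ ih (.rel _ _ rfl)
    | pred n ih =>
      refine .trans _ _ _ ih (.symm _ _ (.rel _ _ ?_))
      rw [← Equiv.Perm.mul_apply, ← _root_.zpow_one_add, add_sub_cancel]

lemma sameHurwitzOrbit_iff_sameCycle {t s : Fin 2 → G} :
    SameHurwitzOrbit t s ↔ pairMove.SameCycle t s := by
  rw [← eqvGen_perm_apply_iff_sameCycle]
  simp only [SameHurwitzOrbit, ← isHurwitzMove_iff_pairMove_eq]

lemma ncard_setOf_sameCycle {α : Type*} (f : Equiv.Perm α) (x : α) :
    {y | f.SameCycle x y}.ncard = Function.minimalPeriod f x := by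
  have h_orbit : {y | f.SameCycle x y} = MulAction.orbit (Subgroup.zpowers f) x := by
    ext y
    simp [Equiv.Perm.SameCycle, MulAction.mem_orbit_iff, Subgroup.smul_def]
  rw [h_orbit, ← Nat.card_coe_set_eq, Nat.card_congr (MulAction.orbitZPowersEquiv f x),
    Nat.card_zmod]
  rfl

lemma SameHurwitzOrbit.mul_eq {t s : Fin 2 → G} (h : SameHurwitzOrbit t s) :
    t 0 * t 1 = s 0 * s 1 := by
  refine h.map_eq (f := fun u => u 0 * u 1) fun u v huv => ?_
  rw [isHurwitzMove_iff_pairMove_eq] at huv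
  simp [← huv, pairMove_apply, mul_assoc]

lemma injOn_fst_setOf_sameHurwitzOrbit (t : Fin 2 → G) :
    Set.InjOn (fun s : Fin 2 → G => s 0) {s | SameHurwitzOrbit t s} := by
  intro s hs s' hs' (hfst : s 0 = s' 0)
  have hmul : s 0 * s 1 = s' 0 * s' 1 := hs.mul_eq.symm.trans hs'.mul_eq
  ext j
  fin_cases j
  · exact hfst
  · exact mul_left_cancel (hfst ▸ hmul)

lemma setOf_appears_eq_image_fst (t : Fin 2 → G) :
    {r | Appears r t} = (fun s : Fin 2 → G => s 0) '' {s | SameHurwitzOrbit t s} := by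
  ext r
  constructor
  · rintro ⟨s, hs, j, rfl⟩
    fin_cases j
    · exact ⟨s, hs, rfl⟩
    · exact ⟨pairMove s, hs.trans _ _ _ (.rel _ _ (isHurwitzMove_iff_pairMove_eq.2 rfl)), rfl⟩
  · rintro ⟨s, hs, rfl⟩
    exact ⟨s, hs, 0, rfl⟩

lemma ncard_setOf_appears (t : Fin 2 → G) :
    {r | Appears r t}.ncard = {s | SameHurwitzOrbit t s}.ncard := by
  rw [setOf_appears_eq_image_fst, (injOn_fst_setOf_sameHurwitzOrbit t).ncard_image]

lemma isPeriodicPt_pairMove_three {a b : G} (h : a * b * a = b * a * b) :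
    Function.IsPeriodicPt pairMove 3 ![a, b] := by
  have h_conj : b⁻¹ * a * b = a * b * a⁻¹ := by
    rw [eq_mul_inv_iff_mul_eq, mul_assoc, mul_assoc, inv_mul_eq_iff_eq_mul, ← mul_assoc, h,
      mul_assoc]
  have h_first : pairMove ![a, b] = ![b, a * b * a⁻¹] := by simp [pairMove_apply, h_conj]
  have h_conj' : (a * b * a⁻¹)⁻¹ * b * (a * b * a⁻¹) = a := by
    rw [mul_assoc, inv_mul_eq_iff_eq_mul, inv_mul_cancel_right, ← h_conj, mul_assoc,
      mul_inv_cancel_left]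
  have h_second : pairMove ![b, a * b * a⁻¹] = ![a * b * a⁻¹, a] := by
    simpa [pairMove_apply] using h_conj'
  have h_third : pairMove ![a * b * a⁻¹, a] = ![a, b] := by simp [pairMove_apply, mul_assoc]
  change pairMove (pairMove (pairMove ![a, b])) = ![a, b]
  rw [h_first, h_second, h_third]

lemma ncard_setOf_sameHurwitzOrbit_of_braid {a b : G} (h : a * b * a = b * a * b) (hne : a ≠ b) :
    {s | SameHurwitzOrbit ![a, b] s}.ncard = 3 := by
  have h_moved : ¬ Function.IsFixedPt pairMove ![a, b] := fun h_fixed =>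
    hne (congrFun h_fixed 0).symm
  simp only [sameHurwitzOrbit_iff_sameCycle]
  rw [ncard_setOf_sameCycle,
    Function.minimalPeriod_eq_prime (isPeriodicPt_pairMove_three h) h_moved]

end Hurwitz

section MatrixFinTwo

variable {R : Type*} [CommRing R] (M N : Matrix (Fin 2) (Fin 2) R)

-- Cayley–Hamilton for `M * N`, with one factor `N` cancelled.
lemma mul_mul_self_fin_two :
    M * N * M = (M * N).trace • M - M.det • N.adjugate := by
  ext i j
  fin_cases i <;> fin_cases j <;>
    simp [Matrix.mul_apply, Matrix.trace_fin_two, Matrix.det_fin_two, Matrix.adjugate_fin_two] <;>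
    ring

lemma adjugate_fin_two_eq_trace_smul_one_sub : M.adjugate = M.trace • 1 - M := by
  ext i j
  fin_cases i <;> fin_cases j <;> simp [Matrix.adjugate_fin_two, Matrix.trace_fin_two]

lemma trace_mul_adjugate_fin_two : (M * N.adjugate).trace = M.trace * N.trace - (M * N).trace := by
  simp [adjugate_fin_two_eq_trace_smul_one_sub, Matrix.mul_sub, mul_comm]

lemma trace_eq_one_add_det_of_det_sub_one_eq_zero {M : Matrix (Fin 2) (Fin 2) R}
    (h : (M - 1).det = 0) : M.trace = 1 + M.det := by
  have h_expand : (M - 1).det = 1 - M.trace + M.det := by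
    simp [Matrix.det_fin_two, Matrix.trace_fin_two]
    ring
  linear_combination h_expand - h

lemma braid_of_trace_mul_eq_det {M N : Matrix (Fin 2) (Fin 2) R} (htr : M.trace = N.trace)
    (hdet : M.det = N.det) (hmul : (M * N).trace = M.det) : M * N * M = N * M * N := by
  rw [mul_mul_self_fin_two M N, mul_mul_self_fin_two N M,
    Matrix.trace_mul_comm N M, hmul, ← hdet, adjugate_fin_two_eq_trace_smul_one_sub,
    adjugate_fin_two_eq_trace_smul_one_sub, htr]
  module

end MatrixFinTwo

section QuaternionNormalForm

lemma isPrimitiveRoot_ω : IsPrimitiveRoot ω 3 := by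
  simpa [ω] using Complex.isPrimitiveRoot_exp 3 (by norm_num)

lemma ω_sq_add_ω_add_one : ω ^ 2 + ω + 1 = 0 := by
  have h_sum := isPrimitiveRoot_ω.geom_sum_eq_zero (by norm_num)
  simp only [Finset.sum_range_succ, Finset.sum_range_zero] at h_sum
  linear_combination h_sum

/-- Generators `I`, `J`, `K = I J` of the quaternion subgroup of `G₄`, chosen so that
`B = -I A` and conjugation by `A` permutes `I`, `J`, `K` cyclically. -/
def g4QuaternionBasis :
    QuaternionAlgebra.Basis (Matrix (Fin 2) (Fin 2) ℂ) (-1 : ℤ) 0 (-1) where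
  i := !![-(1 + 2 * ω) / 3, -ω; 2 * ω ^ 2 / 3, (1 + 2 * ω) / 3]
  j := !![-(1 + 2 * ω) / 3, -1; 2 / 3, (1 + 2 * ω) / 3]
  k := !![-(1 + 2 * ω) / 3, -ω ^ 2; 2 * ω / 3, (1 + 2 * ω) / 3]
  i_mul_i := by
    have hω := ω_sq_add_ω_add_one
    ext i j; fin_cases i <;> fin_cases j <;> simp <;> grind
  j_mul_j := by
    have hω := ω_sq_add_ω_add_one
    ext i j; fin_cases i <;> fin_cases j <;> simp <;> grind
  i_mul_j := by
    have hω := ω_sq_add_ω_add_one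
    ext i j; fin_cases i <;> fin_cases j <;> simp <;> grind
  j_mul_i := by
    have hω := ω_sq_add_ω_add_one
    ext i j; fin_cases i <;> fin_cases j <;> simp <;> grind

/-- The representation of the Lipschitz quaternions whose norm one elements map onto the quaternion
subgroup of `G₄`. -/
def quaternionRep : ℍ[ℤ] →ₐ[ℤ] Matrix (Fin 2) (Fin 2) ℂ :=
  QuaternionAlgebra.lift g4QuaternionBasis

lemma quaternionRep_apply (q : ℍ[ℤ]) :
    quaternionRep q =
      !![q.re - (1 + 2 * ω) / 3 * (q.imI + q.imJ + q.imK),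
          -(ω * q.imI + q.imJ + ω ^ 2 * q.imK);
        2 / 3 * (ω ^ 2 * q.imI + q.imJ + ω * q.imK),
          q.re + (1 + 2 * ω) / 3 * (q.imI + q.imJ + q.imK)] := by
  change algebraMap ℤ _ q.re + q.imI • g4QuaternionBasis.i + q.imJ • g4QuaternionBasis.j +
    q.imK • g4QuaternionBasis.k = _
  rw [Algebra.algebraMap_eq_smul_one, Matrix.one_fin_two]
  ext i j
  fin_cases i <;> fin_cases j <;>
    simp [g4QuaternionBasis] <;> ring

lemma trace_quaternionRep (q : ℍ[ℤ]) : (quaternionRep q).trace = 2 * q.re := by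
  rw [quaternionRep_apply, Matrix.trace_fin_two_of]
  ring

lemma det_quaternionRep (q : ℍ[ℤ]) : (quaternionRep q).det = normSq q := by
  rw [quaternionRep_apply, Matrix.det_fin_two_of, Quaternion.normSq_def']
  push_cast
  have hω := ω_sq_add_ω_add_one
  grind

/-- The rotation `i ↦ j ↦ k ↦ i` of the quaternions, by which `A` acts on the quaternion subgroup
of `G₄`. -/
def rotateUnits (q : ℍ[ℤ]) : ℍ[ℤ] := ⟨q.re, q.imK, q.imI, q.imJ⟩

lemma normSq_rotateUnits (q : ℍ[ℤ]) : normSq (rotateUnits q) = normSq q := by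
  rw [Quaternion.normSq_def', Quaternion.normSq_def']
  change q.re ^ 2 + q.imK ^ 2 + q.imI ^ 2 + q.imJ ^ 2 = _
  ring

lemma AMat_mul_quaternionRep (q : ℍ[ℤ]) :
    AMat * quaternionRep q = quaternionRep (rotateUnits q) * AMat := by
  rw [quaternionRep_apply, quaternionRep_apply, rotateUnits, AMat]
  have hω := ω_sq_add_ω_add_one
  ext i j
  fin_cases i <;> fin_cases j <;> simp <;> grind

/-- The imaginary unit `i` of the Lipschitz quaternions. -/
def unitI : ℍ[ℤ] := ⟨0, 1, 0, 0⟩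

lemma normSq_unitI : normSq unitI = 1 := by
  rw [Quaternion.normSq_def']
  rfl

lemma BMat_eq_quaternionRep_mul_AMat : BMat = quaternionRep (-unitI) * AMat := by
  rw [map_neg, quaternionRep_apply, unitI, AMat, BMat]
  have hω := ω_sq_add_ω_add_one
  ext i j
  fin_cases i <;> fin_cases j <;> simp <;> grind

lemma AMat_pow (n : ℕ) : AMat ^ n = !![1, 0; 0, ω ^ n] := by
  induction n with
  | zero => simp [Matrix.one_fin_two]
  | succ n ih => rw [pow_succ, ih, AMat]; simp [pow_succ]

lemma AMat_pow_three : AMat ^ 3 = 1 := by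
  rw [AMat_pow, isPrimitiveRoot_ω.pow_eq_one, Matrix.one_fin_two]

lemma BMat_pow_three : BMat ^ 3 = 1 := by
  have hω := ω_sq_add_ω_add_one
  rw [BMat]
  ext i j
  fin_cases i <;> fin_cases j <;> simp [pow_succ] <;> grind

lemma exists_AMat_pow_mul_quaternionRep (n : ℕ) {q : ℍ[ℤ]} (hq : normSq q = 1) :
    ∃ q' : ℍ[ℤ], normSq q' = 1 ∧ AMat ^ n * quaternionRep q = quaternionRep q' * AMat ^ n := by
  induction n with
  | zero => exact ⟨q, hq, by simp⟩
  | succ n ih =>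
    obtain ⟨q', hq', h_comm⟩ := ih
    refine ⟨rotateUnits q', (normSq_rotateUnits q').trans hq', ?_⟩
    rw [pow_succ', mul_assoc, h_comm, ← mul_assoc, AMat_mul_quaternionRep, mul_assoc]

/-- The matrices `q Aⁿ` with `q` in the quaternion group; they turn out to contain `G₄`. -/
def quaternionNormalForms : Submonoid (Matrix (Fin 2) (Fin 2) ℂ) where
  carrier := {M | ∃ q : ℍ[ℤ], normSq q = 1 ∧ ∃ n : ℕ, M = quaternionRep q * AMat ^ n}
  one_mem' := ⟨1, map_one _, 0, by simp⟩
  mul_mem' := by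
    rintro _ _ ⟨p, hp, m, rfl⟩ ⟨q, hq, n, rfl⟩
    obtain ⟨q', hq', h_comm⟩ := exists_AMat_pow_mul_quaternionRep m hq
    refine ⟨p * q', by rw [map_mul, hp, hq', one_mul], m + n, ?_⟩
    rw [map_mul, pow_add, mul_assoc, ← mul_assoc (AMat ^ m), h_comm]
    simp only [mul_assoc]

lemma AMat_mem_quaternionNormalForms : AMat ∈ quaternionNormalForms :=
  ⟨1, map_one _, 1, by simp⟩

lemma BMat_mem_quaternionNormalForms : BMat ∈ quaternionNormalForms :=
  ⟨-unitI, by rw [Quaternion.normSq_neg, normSq_unitI], 1, by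
    rw [pow_one, BMat_eq_quaternionRep_mul_AMat]⟩

lemma coe_mem_of_coe_inv_mem_of_pow_eq_one {M : Type*} [Monoid M] (N : Submonoid M) {u : Mˣ} {x : M}
    {n : ℕ} (hpow : x ^ (n + 1) = 1) (hx : x ∈ N) (hu : ↑u⁻¹ = x) : (u : M) ∈ N := by
  have h_eq : (u : M) = x ^ n := calc
    (u : M) = u * x ^ (n + 1) := by rw [hpow, mul_one]
    _ = x ^ n := by rw [pow_succ', ← hu, Units.mul_inv_cancel_left]
  exact h_eq ▸ pow_mem hx n

lemma mat_mem_quaternionNormalForms (t : G4) : mat t ∈ quaternionNormalForms := by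
  suffices h_le : G4.toSubmonoid ≤ quaternionNormalForms.comap (Units.coeHom _) from h_le t.2
  rw [G4, Subgroup.closure_toSubmonoid, Submonoid.closure_le]
  rintro g ((hg | hg) | (hg | hg)) <;>
    change (g : Matrix (Fin 2) (Fin 2) ℂ) ∈ quaternionNormalForms
  · exact hg ▸ AMat_mem_quaternionNormalForms
  · exact hg ▸ BMat_mem_quaternionNormalForms
  · exact coe_mem_of_coe_inv_mem_of_pow_eq_one _ AMat_pow_three AMat_mem_quaternionNormalForms hg
  · exact coe_mem_of_coe_inv_mem_of_pow_eq_one _ BMat_pow_three BMat_mem_quaternionNormalForms hg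

lemma mat_mul (s t : G4) : mat (s * t) = mat s * mat t := rfl

lemma mat_one : mat 1 = 1 := rfl

lemma mat_injective : Function.Injective mat := fun _ _ h => Subtype.ext (Units.ext h)

lemma eq_one_or_eq_neg_one_of_normSq_eq_one {q : ℍ[ℤ]} (hq : normSq q = 1) (hre : q.re ≠ 0) :
    q = 1 ∨ q = -1 := by
  rw [Quaternion.normSq_def'] at hq
  have h_sq : 0 < q.re ^ 2 := by positivity
  have hI : q.imI = 0 := by nlinarith
  have hJ : q.imJ = 0 := by nlinarith
  have hK : q.imK = 0 := by nlinarith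
  have h_re : q.re = 1 ∨ q.re = -1 := by
    simpa [hI, hJ, hK] using hq
  exact h_re.imp (fun h => by ext <;> simp [*]) (fun h => by ext <;> simp [*])

lemma mat_eq_one_or_eq_neg_one_or_trace_eq_zero {t : G4} (h : (mat t).det = 1) :
    mat t = 1 ∨ mat t = -1 ∨ (mat t).trace = 0 := by
  obtain ⟨q, hq, n, ht⟩ := mat_mem_quaternionNormalForms t
  have hωn : ω ^ n = 1 := by
    rw [ht, Matrix.det_mul, det_quaternionRep, hq, AMat_pow, Matrix.det_fin_two_of] at h
    simpa using h
  rw [AMat_pow, hωn, ← Matrix.one_fin_two, mul_one] at ht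
  by_cases hre : q.re = 0
  · exact .inr (.inr (by rw [ht, trace_quaternionRep, hre]; simp))
  · rcases eq_one_or_eq_neg_one_of_normSq_eq_one hq hre with rfl | rfl
    · exact .inl (by rw [ht, map_one])
    · exact .inr (.inl (by rw [ht, map_neg, map_one]))

end QuaternionNormalForm

section ReflectionClass

/-- The reflections of `G₄` of determinant `d`; `R1` and `R2` are the cases `d = ω`, `d = ω²`. -/
def reflectionClass (d : ℂ) : Set G4 := {t | IsReflection t ∧ (mat t).det = d}

variable {d : ℂ}

lemma conj_mem_reflectionClass {t : G4} (ht : t ∈ reflectionClass d) (g : G4) :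
    g * t * g⁻¹ ∈ reflectionClass d := by
  refine ⟨⟨fun h => ht.1.1 (conj_eq_one_iff.1 h), ?_⟩, ?_⟩
  · have h_sub : mat (g * t * g⁻¹) - 1 = mat g * (mat t - 1) * mat g⁻¹ := by
      rw [mul_sub, sub_mul, mul_one, ← mat_mul, ← mat_mul, ← mat_mul, mul_inv_cancel, mat_one]
    rw [h_sub]
    exact (Matrix.det_units_conj (g : GL (Fin 2) ℂ) (mat t - 1)).trans ht.1.2
  · exact (Matrix.det_units_conj (g : GL (Fin 2) ℂ) (mat t)).trans ht.2

lemma trace_of_mem_reflectionClass {t : G4} (ht : t ∈ reflectionClass d) :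
    (mat t).trace = 1 + d := by
  rw [trace_eq_one_add_det_of_det_sub_one_eq_zero ht.1.2, ht.2]

lemma det_smul_mat_inv (t : G4) : (mat t).det • mat t⁻¹ = (mat t).adjugate := by
  have h_inv : mat t * mat t⁻¹ = 1 := by rw [← mat_mul, mul_inv_cancel, mat_one]
  calc (mat t).det • mat t⁻¹ = (mat t).adjugate * mat t * mat t⁻¹ := by
        rw [Matrix.adjugate_mul, Matrix.smul_mul, one_mul]
    _ = (mat t).adjugate := by rw [mul_assoc, h_inv, mul_one]

lemma det_mul_trace_mat_mul_inv (s t : G4) :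
    (mat t).det * (mat (s * t⁻¹)).trace =
      (mat s).trace * (mat t).trace - (mat s * mat t).trace := by
  rw [← trace_mul_adjugate_fin_two, ← det_smul_mat_inv, mat_mul, Matrix.mul_smul, Matrix.trace_smul,
    smul_eq_mul]

lemma trace_mat_mul_inv_eq_zero (hd : d ^ 2 + d + 1 = 0) {s t : G4} (hs : s ∈ reflectionClass d)
    (ht : t ∈ reflectionClass d) (hne : s ≠ t) : (mat (s * t⁻¹)).trace = 0 := by
  have h_cancel : mat (s * t⁻¹) * mat t = mat s := by rw [← mat_mul, inv_mul_cancel_right]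
  have hd₀ : d ≠ 0 := by rintro rfl; simp at hd
  have h_det : (mat (s * t⁻¹)).det = 1 := by
    have h_mul := congrArg Matrix.det h_cancel
    rw [Matrix.det_mul, ht.2, hs.2] at h_mul
    exact (mul_eq_right₀ hd₀).1 h_mul
  rcases mat_eq_one_or_eq_neg_one_or_trace_eq_zero h_det with h_one | h_neg | h_trace
  · rw [h_one, one_mul] at h_cancel
    exact absurd (mat_injective h_cancel).symm hne
  · rw [h_neg, neg_one_mul] at h_cancel
    have h_tr := congrArg Matrix.trace h_cancel
    rw [Matrix.trace_neg, trace_of_mem_reflectionClass ht, trace_of_mem_reflectionClass hs] at h_tr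
    have : (1 : ℂ) = 0 := by linear_combination hd + d / 2 * h_tr
    exact absurd this one_ne_zero
  · exact h_trace

lemma braid_of_mem_reflectionClass (hd : d ^ 2 + d + 1 = 0) {s t : G4}
    (hs : s ∈ reflectionClass d) (ht : t ∈ reflectionClass d) (hne : s ≠ t) :
    s * t * s = t * s * t := by
  have hs_tr := trace_of_mem_reflectionClass hs
  have ht_tr := trace_of_mem_reflectionClass ht
  have h_tr : (mat s * mat t).trace = (mat s).det := by
    have h_inv := det_mul_trace_mat_mul_inv s t
    rw [trace_mat_mul_inv_eq_zero hd hs ht hne, hs_tr, ht_tr] at h_inv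
    rw [hs.2]
    linear_combination hd + h_inv
  exact mat_injective <|
    braid_of_trace_mul_eq_det (hs_tr.trans ht_tr.symm) (hs.2.trans ht.2.symm) h_tr

lemma exists_eq_reflectionClass {R : Set G4} (hR : R = R1 ∨ R = R2) :
    ∃ d : ℂ, d ^ 2 + d + 1 = 0 ∧ R = reflectionClass d := by
  rcases hR with rfl | rfl
  · exact ⟨ω, ω_sq_add_ω_add_one, rfl⟩
  · refine ⟨ω ^ 2, ?_, rfl⟩
    linear_combination (ω ^ 2 - ω + 1) * ω_sq_add_ω_add_one

end ReflectionClass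

theorem g4_same_class_pair_orbit (R : Set G4) (hR : R = R1 ∨ R = R2)
    (t₁ t₂ : G4) (h₁ : t₁ ∈ R) (h₂ : t₂ ∈ R) (hne : t₁ ≠ t₂) :
    {s : Fin 2 → G4 | SameHurwitzOrbit ![t₁, t₂] s}.ncard = 3 ∧
    {r : G4 | r ∈ R ∧ Appears r ![t₁, t₂]}.ncard = 3 := by
  obtain ⟨d, hd, rfl⟩ := exists_eq_reflectionClass hR
  have h_braid := braid_of_mem_reflectionClass hd h₁ h₂ hne
  have h_entries : {r | r ∈ reflectionClass d ∧ Appears r ![t₁, t₂]} =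
      {r | Appears r ![t₁, t₂]} := by
    have h_mem : ∀ j, ![t₁, t₂] j ∈ reflectionClass d := Fin.forall_fin_two.2 ⟨h₁, h₂⟩
    ext r
    exact and_iff_right_of_imp (Appears.mem (fun _ => conj_mem_reflectionClass) h_mem)
  rw [h_entries, ncard_setOf_appears]
  exact ⟨ncard_setOf_sameHurwitzOrbit_of_braid h_braid hne,
    ncard_setOf_sameHurwitzOrbit_of_braid h_braid hne⟩
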